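/- arXiv:2210.11104 — 2 statements merged into one kernel-verified Lean document; each statement's English description precedes it below -/
import Mathlib

section
/- Let X_1 and ε_2 be independent random variables, each uniformly distributed on [−1,1], let 0 < β ≤ 1 be a real constant, and let X_2 = βX_1 + ε_2. Then E[(X_1 − E[X_1 | X_2])²] = (2 − β)/6. -/
open MeasureTheory ProbabilityTheory
open scoped ENNReal

/-!
Given `X₂ = s`, the variable `X₁` is uniform on the interval `[-1, 1] ∩ [(s - 1)/β, (s + 1)/β]`
(for `β > 0`), so `E[X₁ | X₂]` is the midpoint of that interval. The joint density is `1/4`, hence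
the residual variance is `1/4` of the integral over `s` of `ℓ(s)³ / 12`, where `ℓ(s)` is the length
of the interval. As a function of `s / β`, `ℓ` is an even trapezoid, whose cube is integrated by
splitting it into its plateau and its slope.
-/

theorem setIntegral_Icc_id_eq_setIntegral_center (a b : ℝ) :
    ∫ x in Set.Icc a b, x = ∫ _ in Set.Icc a b, (a + b) / 2 := by
  rcases le_or_gt a b with hab | hba
  · simp only [integral_Icc_eq_integral_Ioc, ← intervalIntegral.integral_of_le hab, integral_id,
      intervalIntegral.integral_const, smul_eq_mul]
    ring
  · simp [Set.Icc_eq_empty hba.not_ge]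

theorem setIntegral_Icc_sub_center_sq (a b : ℝ) :
    ∫ x in Set.Icc a b, (x - (a + b) / 2) ^ 2 = max (b - a) 0 ^ 3 / 12 := by
  rcases le_or_gt a b with hab | hba
  · rw [integral_Icc_eq_integral_Ioc, ← intervalIntegral.integral_of_le hab,
      intervalIntegral.integral_comp_sub_right (fun x => x ^ 2), integral_pow,
      max_eq_left (sub_nonneg.2 hab)]
    push_cast
    ring
  · simp [Set.Icc_eq_empty hba.not_ge, max_eq_right (sub_nonpos.2 hba.le)]

theorem integral_trapezoid_pow {h c : ℝ} (hh : 0 ≤ h) (hc : h ≤ c) {n : ℕ} (hn : n ≠ 0) :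
    ∫ u, max (min h (c - |u|)) 0 ^ n = 2 * (h ^ n * (c - h) + h ^ (n + 1) / (n + 1)) := by
  have hcont : Continuous fun u : ℝ => max (min h (c - u)) 0 ^ n := by fun_prop
  have plateau : ∫ u in 0..(c - h), max (min h (c - u)) 0 ^ n = h ^ n * (c - h) := by
    rw [intervalIntegral.integral_congr (g := fun _ => h ^ n)]
    · simp [mul_comm]
    · intro u hu
      rw [Set.uIcc_of_le (by linarith)] at hu
      simp only [min_eq_left (show h ≤ c - u by linarith [hu.2]), max_eq_left hh]
  have slope : ∫ u in (c - h)..c, max (min h (c - u)) 0 ^ n = h ^ (n + 1) / (n + 1) := by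
    rw [intervalIntegral.integral_congr (g := fun u => (c - u) ^ n)]
    · rw [intervalIntegral.integral_comp_sub_left (fun u => u ^ n), integral_pow]
      simp
    · intro u hu
      rw [Set.uIcc_of_le (by linarith)] at hu
      simp only [min_eq_right (show c - u ≤ h by linarith [hu.1]),
        max_eq_left (show 0 ≤ c - u by linarith [hu.2])]
  have vanishes : ∀ u ∈ Set.Ioi 0 \ Set.Ioc 0 c, max (min h (c - u)) 0 ^ n = 0 := by
    rintro u ⟨hu0, hu⟩
    have hcu : c < u := not_le.1 fun huc => hu ⟨hu0, huc⟩
    rw [max_eq_right ((min_le_right _ _).trans (by linarith)), zero_pow hn]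
  rw [integral_comp_abs (f := fun u => max (min h (c - u)) 0 ^ n),
    setIntegral_eq_of_subset_of_forall_sdiff_eq_zero measurableSet_Ioi Set.Ioc_subset_Ioi_self
      vanishes,
    ← intervalIntegral.integral_of_le (hh.trans hc),
    ← intervalIntegral.integral_add_adjacent_intervals (hcont.intervalIntegrable 0 (c - h))
      (hcont.intervalIntegrable (c - h) c), plateau, slope]

theorem min_sub_max_eq_min_sub_abs (p r u : ℝ) :
    min p (u + r) - max (-p) (u - r) = min (2 * min p r) (p + r - |u|) := by
  grind

section RegionBetweenClosed

variable {α : Type*}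

/-- The closed variant of `regionBetween`, over the whole base: the points `(y, x)` with
`a y ≤ x ≤ b y`. -/
def regionBetweenClosed (a b : α → ℝ) : Set (α × ℝ) := {p | p.2 ∈ Set.Icc (a p.1) (b p.1)}

theorem indicator_regionBetweenClosed_apply (a b : α → ℝ) (F : α × ℝ → ℝ) (y : α) :
    (fun x => (regionBetweenClosed a b).indicator F (y, x)) =
      (Set.Icc (a y) (b y)).indicator fun x => F (y, x) := rfl

end RegionBetweenClosed

section UniformFibers

variable {Ω α : Type*} [MeasurableSpace Ω] [mα : MeasurableSpace α]

theorem measurableSet_regionBetweenClosed {a b : α → ℝ} (ha : Measurable a) (hb : Measurable b) :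
    MeasurableSet (regionBetweenClosed a b) :=
  (measurableSet_le (by fun_prop) measurable_snd).inter
    (measurableSet_le measurable_snd (by fun_prop))

/-- Under `μ`, the variable `X` is uniform on `[a y, b y]` conditionally on `Y = y`. This is encoded
by the joint law of `(Y, X)` being `ν ⊗ Lebesgue` restricted to the region between `a` and `b`. The
reference measure `ν` carries the normalization; it is not the law of `Y`, whose density with
respect to `ν` is the length of the fiber. -/
structure HasUniformFibers (X : Ω → ℝ) (Y : Ω → α) (a b : α → ℝ) (ν : Measure α)
    (μ : Measure Ω) : Prop where
  measurable : Measurable X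
  measurable_cond : Measurable Y
  measurable_left : Measurable a
  measurable_right : Measurable b
  map_eq : μ.map (fun ω => (Y ω, X ω)) = (ν.prod volume).restrict (regionBetweenClosed a b)

namespace HasUniformFibers

variable {X : Ω → ℝ} {Y : Ω → α} {a b : α → ℝ} {ν : Measure α} {μ : Measure Ω}

theorem restrict [SFinite ν] (h : HasUniformFibers X Y a b ν μ) {B : Set α} (hB : MeasurableSet B) :
    HasUniformFibers X Y a b (ν.restrict B) (μ.restrict (Y ⁻¹' B)) where
  __ := h
  map_eq := by
    have hYX := h.measurable_cond.prodMk h.measurable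
    have hpreimage : Y ⁻¹' B = (fun ω => (Y ω, X ω)) ⁻¹' (B ×ˢ Set.univ) := by ext; simp
    rw [hpreimage, ← Measure.restrict_map hYX (hB.prod .univ), h.map_eq,
      Measure.restrict_comm (hB.prod .univ), ← Measure.prod_restrict, Measure.restrict_univ]

theorem integrable_comp_iff (h : HasUniformFibers X Y a b ν μ) {F : α × ℝ → ℝ} (hF : Measurable F) :
    Integrable (fun ω => F (Y ω, X ω)) μ ↔
      Integrable ((regionBetweenClosed a b).indicator F) (ν.prod volume) := by
  rw [integrable_indicator_iff (measurableSet_regionBetweenClosed h.measurable_left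
    h.measurable_right), IntegrableOn, ← h.map_eq, integrable_map_measure
    hF.aestronglyMeasurable (h.measurable_cond.prodMk h.measurable).aemeasurable]
  rfl

theorem integral_comp [SFinite ν] (h : HasUniformFibers X Y a b ν μ) {F : α × ℝ → ℝ}
    (hF : Measurable F) (hint : Integrable (fun ω => F (Y ω, X ω)) μ) :
    ∫ ω, F (Y ω, X ω) ∂μ = ∫ y, (∫ x in Set.Icc (a y) (b y), F (y, x)) ∂ν := by
  have hYX := h.measurable_cond.prodMk h.measurable
  rw [← integral_map hYX.aemeasurable hF.aestronglyMeasurable, h.map_eq,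
    ← integral_indicator (measurableSet_regionBetweenClosed h.measurable_left h.measurable_right),
    integral_prod _ ((h.integrable_comp_iff hF).1 hint)]
  simp only [indicator_regionBetweenClosed_apply, integral_indicator measurableSet_Icc]

-- By Tonelli, since the integral of `|center|` over a fiber is the modulus of that of `x`.
theorem integrable_center (h : HasUniformFibers X Y a b ν μ) (hX : Integrable X μ) :
    Integrable (fun ω => (a (Y ω) + b (Y ω)) / 2) μ := by
  have ha := h.measurable_left
  have hb := h.measurable_right
  have hmeas : Measurable fun p : α × ℝ => (a p.1 + b p.1) / 2 := by fun_prop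
  have hfib : Integrable (fun y => ∫ x in Set.Icc (a y) (b y), x) ν := by
    simpa only [indicator_regionBetweenClosed_apply, integral_indicator measurableSet_Icc] using
      ((h.integrable_comp_iff measurable_snd).1 hX).integral_prod_left
  rw [h.integrable_comp_iff hmeas, integrable_prod_iff
    (hmeas.indicator (measurableSet_regionBetweenClosed ha hb)).aestronglyMeasurable]
  refine ⟨.of_forall fun y => ?_, hfib.norm.congr (.of_forall fun y => ?_)⟩
  · rw [indicator_regionBetweenClosed_apply, integrable_indicator_iff measurableSet_Icc]
    exact (continuousOn_const (c := (a y + b y) / 2)).integrableOn_Icc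
  · simp only [norm_indicator_eq_indicator_norm, indicator_regionBetweenClosed_apply,
      integral_indicator measurableSet_Icc, setIntegral_Icc_id_eq_setIntegral_center,
      setIntegral_const, smul_eq_mul, norm_mul, Real.norm_of_nonneg measureReal_nonneg]

theorem condExp_ae_eq_center [IsFiniteMeasure μ] [SFinite ν] (h : HasUniformFibers X Y a b ν μ)
    (hX : Integrable X μ) :
    μ[X | MeasurableSpace.comap Y mα] =ᵐ[μ] fun ω => (a (Y ω) + b (Y ω)) / 2 := by
  have ha := h.measurable_left
  have hb := h.measurable_right
  have hc : Integrable (fun ω => (a (Y ω) + b (Y ω)) / 2) μ := h.integrable_center hX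
  refine (ae_eq_condExp_of_forall_setIntegral_eq h.measurable_cond.comap_le hX
    (fun _ _ _ => hc.integrableOn) ?_ ?_).symm
  · rintro _ ⟨B, hB, rfl⟩ _
    have hres := h.restrict hB
    calc ∫ ω in Y ⁻¹' B, (a (Y ω) + b (Y ω)) / 2 ∂μ
      _ = ∫ y in B, (∫ _ in Set.Icc (a y) (b y), (a y + b y) / 2) ∂ν :=
        hres.integral_comp (F := fun p => (a p.1 + b p.1) / 2) (by fun_prop) hc.integrableOn
      _ = ∫ y in B, (∫ x in Set.Icc (a y) (b y), x) ∂ν := by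
        simp only [setIntegral_Icc_id_eq_setIntegral_center]
      _ = ∫ ω in Y ⁻¹' B, X ω ∂μ :=
        (hres.integral_comp measurable_snd hX.integrableOn).symm
  · have hcenter : Measurable fun y => (a y + b y) / 2 := by fun_prop
    exact (hcenter.comp (comap_measurable Y)).aestronglyMeasurable

theorem integral_sub_condExp_sq [IsFiniteMeasure μ] [SFinite ν]
    (h : HasUniformFibers X Y a b ν μ) (hX : MemLp X 2 μ) :
    ∫ ω, (X ω - (μ[X | MeasurableSpace.comap Y mα]) ω) ^ 2 ∂μ =
      ∫ y, max (b y - a y) 0 ^ 3 / 12 ∂ν := by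
  have ha := h.measurable_left
  have hb := h.measurable_right
  have hcond := h.condExp_ae_eq_center (hX.integrable one_le_two)
  have hresid : MemLp (fun ω => X ω - (a (Y ω) + b (Y ω)) / 2) 2 μ :=
    hX.sub ((hX.condExp one_le_two).ae_eq hcond)
  calc ∫ ω, (X ω - (μ[X | MeasurableSpace.comap Y mα]) ω) ^ 2 ∂μ
    _ = ∫ ω, (X ω - (a (Y ω) + b (Y ω)) / 2) ^ 2 ∂μ :=
      integral_congr_ae (hcond.mono fun ω hω => by simp only [hω])
    _ = ∫ y, (∫ x in Set.Icc (a y) (b y), (x - (a y + b y) / 2) ^ 2) ∂ν :=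
      h.integral_comp (F := fun p => (p.2 - (a p.1 + b p.1) / 2) ^ 2) (by fun_prop)
        hresid.integrable_sq
    _ = ∫ y, max (b y - a y) 0 ^ 3 / 12 ∂ν := by simp only [setIntegral_Icc_sub_center_sq]

end HasUniformFibers

end UniformFibers

theorem measurePreserving_shear {α : Type*} [MeasurableSpace α] (ν : Measure α) [SFinite ν]
    {f : α → ℝ} (hf : Measurable f) :
    MeasurePreserving (fun p : α × ℝ => (f p.1 + p.2, p.1)) (ν.prod volume) (volume.prod ν) :=
  Measure.measurePreserving_swap.comp <|
    (MeasurePreserving.id ν).skew_product (g := fun x e => f x + e) (by fun_prop)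
      (.of_forall fun x => map_add_left_eq_self volume (f x))

theorem shear_preimage_regionBetweenClosed {β : ℝ} (hβ : β ≠ 0) (p q : ℝ) :
    (fun z : ℝ × ℝ => (β * z.1 + z.2, z.1)) ⁻¹'
      regionBetweenClosed (fun s => max (-p) (s / β - q / |β|)) (fun s => min p (s / β + q / |β|)) =
      Set.Icc (-p) p ×ˢ Set.Icc (-q) q := by
  ext ⟨x, e⟩
  have hnoise : |e / β| ≤ q / |β| ↔ |e| ≤ q := by
    rw [abs_div, div_le_div_iff_of_pos_right (abs_pos.2 hβ)]
  rw [abs_le, abs_le] at hnoise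
  simp only [regionBetweenClosed, Set.mem_preimage, Set.mem_ofPred_eq, Set.mem_prod, Set.mem_Icc,
    max_le_iff, le_min_iff, add_div, mul_div_cancel_left₀ x hβ, ← hnoise]
  constructor <;> rintro ⟨⟨_, _⟩, _, _⟩ <;> refine ⟨⟨?_, ?_⟩, ?_, ?_⟩ <;> linarith

section LinearModel

variable {Ω : Type*} [MeasurableSpace Ω] {μ : Measure Ω} [IsFiniteMeasure μ] {X ε : Ω → ℝ}

theorem hasUniformFibers_linear_model (hX : Measurable X) (hε : Measurable ε)
    (hindep : IndepFun X ε μ) {p q : ℝ} {c d : ℝ≥0∞}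
    (hXlaw : μ.map X = c • volume.restrict (Set.Icc (-p) p))
    (hεlaw : μ.map ε = d • volume.restrict (Set.Icc (-q) q)) {β : ℝ} (hβ : β ≠ 0) :
    HasUniformFibers X (fun ω => β * X ω + ε ω) (fun s => max (-p) (s / β - q / |β|))
      (fun s => min p (s / β + q / |β|)) ((c * d) • volume) μ where
  measurable := hX
  measurable_cond := by fun_prop
  measurable_left := by fun_prop
  measurable_right := by fun_prop
  map_eq := by
    have hshear := (measurePreserving_shear volume (measurable_const_mul β)).restrict_preimage
      (measurableSet_regionBetweenClosed (a := fun s => max (-p) (s / β - q / |β|))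
        (b := fun s => min p (s / β + q / |β|)) (by fun_prop) (by fun_prop))
    rw [shear_preimage_regionBetweenClosed hβ] at hshear
    calc μ.map (fun ω => (β * X ω + ε ω, X ω))
      _ = (μ.map fun ω => (X ω, ε ω)).map fun z => (β * z.1 + z.2, z.1) :=
        (Measure.map_map (g := fun z : ℝ × ℝ => (β * z.1 + z.2, z.1))
          (f := fun ω => (X ω, ε ω)) (by fun_prop) (by fun_prop)).symm
      _ = ((c * d) • (volume.prod volume).restrict (Set.Icc (-p) p ×ˢ Set.Icc (-q) q)).map
            fun z => (β * z.1 + z.2, z.1) := by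
        rw [hindep.map_prod_eq_prod_map_map hX.aemeasurable hε.aemeasurable, hXlaw, hεlaw,
          Measure.prod_smul_left, Measure.prod_smul_right, Measure.prod_restrict, smul_smul]
      _ = _ := by
        rw [Measure.map_smul, hshear.map_eq, Measure.prod_smul_left, Measure.restrict_smul]

theorem memLp_of_map_eq_smul_restrict_Icc (hX : Measurable X) {a b : ℝ} {c : ℝ≥0∞}
    (hXlaw : μ.map X = c • volume.restrict (Set.Icc a b)) (p : ℝ≥0∞) : MemLp X p μ := by
  refine memLp_of_bounded (a := a) (b := b) (ae_of_ae_map hX.aemeasurable ?_)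
    hX.aestronglyMeasurable p
  rw [hXlaw]
  exact Measure.ae_smul_measure (ae_restrict_mem measurableSet_Icc) c

end LinearModel

theorem integral_fiber_length_pow_three {β : ℝ} (hβ : β ≠ 0) :
    ∫ s, max (min 1 (s / β + 1 / |β|) - max (-1) (s / β - 1 / |β|)) 0 ^ 3 =
      8 * (2 * max 1 |β| - min 1 |β|) / max 1 |β| ^ 3 := by
  have hβpos : 0 < |β| := abs_pos.2 hβ
  simp only [min_sub_max_eq_min_sub_abs]
  rw [Measure.integral_comp_div
    (fun u => max (min (2 * min 1 (1 / |β|)) (1 + 1 / |β| - |u|)) 0 ^ 3),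
    integral_trapezoid_pow (by positivity)
      (by linarith [min_le_left 1 (1 / |β|), min_le_right 1 (1 / |β|)]) three_ne_zero, smul_eq_mul]
  rcases le_total |β| 1 with hle | hge
  · rw [min_eq_left ((one_le_div hβpos).2 hle), max_eq_left hle, min_eq_right hle]
    norm_num
    field_simp
    ring
  · rw [min_eq_right ((div_le_one hβpos).2 hge), max_eq_right hge, min_eq_left hge]
    norm_num
    field_simp
    ring

theorem uniform_linear_model_residual_variance_of_le_one_general
    {Ω : Type*} [MeasurableSpace Ω] (μ : Measure Ω) [IsProbabilityMeasure μ]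
    (X₁ ε₂ : Ω → ℝ) (hX₁ : Measurable X₁) (hε₂ : Measurable ε₂)
    (hindep : IndepFun X₁ ε₂ μ)
    (hu1 : Measure.map X₁ μ = (2 : ℝ≥0∞)⁻¹ • volume.restrict (Set.Icc (-1 : ℝ) 1))
    (hu2 : Measure.map ε₂ μ = (2 : ℝ≥0∞)⁻¹ • volume.restrict (Set.Icc (-1 : ℝ) 1))
    (β : ℝ) (hβ : β ≠ 0) (X₂ : Ω → ℝ) (hX₂ : X₂ = fun ω => β * X₁ ω + ε₂ ω) :
    ∫ ω, (X₁ ω - (μ[X₁ | MeasurableSpace.comap X₂ Real.measurableSpace]) ω) ^ 2 ∂μ =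
      (2 * max 1 |β| - min 1 |β|) / (6 * max 1 |β| ^ 3) := by
  subst hX₂
  have hfibers := hasUniformFibers_linear_model hX₁ hε₂ hindep hu1 hu2 hβ
  calc ∫ ω, (X₁ ω - (μ[X₁ | MeasurableSpace.comap (fun ω => β * X₁ ω + ε₂ ω)
          Real.measurableSpace]) ω) ^ 2 ∂μ
    _ = ∫ s, max (min 1 (s / β + 1 / |β|) - max (-1) (s / β - 1 / |β|)) 0 ^ 3 / 12
          ∂((2 : ℝ≥0∞)⁻¹ * 2⁻¹) • volume :=
      hfibers.integral_sub_condExp_sq (memLp_of_map_eq_smul_restrict_Icc hX₁ hu1 2)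
    _ = 4⁻¹ * (8 * (2 * max 1 |β| - min 1 |β|) / max 1 |β| ^ 3 / 12) := by
      rw [integral_smul_measure, integral_div, integral_fiber_length_pow_three hβ]
      norm_num
    _ = (2 * max 1 |β| - min 1 |β|) / (6 * max 1 |β| ^ 3) := by ring

/-- For the linear model `X₂ = β X₁ + ε₂` with `X₁, ε₂` i.i.d. uniform on `[-1,1]`
and `0 < β ≤ 1`, the expected conditional variance `E[(X₁ − E[X₁ | X₂])²]` equals
`(2 − β)/6`. -/
theorem uniform_linear_model_residual_variance_of_le_one
    {Ω : Type*} [MeasurableSpace Ω] (μ : Measure Ω) [IsProbabilityMeasure μ]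
    (X₁ ε₂ : Ω → ℝ) (hX₁ : Measurable X₁) (hε₂ : Measurable ε₂)
    (hindep : IndepFun X₁ ε₂ μ)
    (hu1 : Measure.map X₁ μ = (2 : ℝ≥0∞)⁻¹ • volume.restrict (Set.Icc (-1 : ℝ) 1))
    (hu2 : Measure.map ε₂ μ = (2 : ℝ≥0∞)⁻¹ • volume.restrict (Set.Icc (-1 : ℝ) 1))
    (β : ℝ) (hβ0 : 0 < β) (hβ1 : β ≤ 1)
    (X₂ : Ω → ℝ) (hX₂ : X₂ = fun ω => β * X₁ ω + ε₂ ω) :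
    ∫ ω, (X₁ ω - (μ[X₁ | MeasurableSpace.comap X₂ Real.measurableSpace]) ω) ^ 2 ∂μ =
      (2 - β) / 6 := by
  rw [uniform_linear_model_residual_variance_of_le_one_general μ X₁ ε₂ hX₁ hε₂ hindep hu1 hu2 β
    hβ0.ne' X₂ hX₂, abs_of_pos hβ0, max_eq_left hβ1, min_eq_right hβ1, mul_one, one_pow, mul_one]
end

section
/- Let X_1 be an integrable random variable that is symmetric about zero (X_1 and −X_1 have the same distribution), let f : ℝ → ℝ be a measurable even function with f(X_1) integrable, let ε_2 be a random variable independent of X_1 with E[ε_2] = 0, and let X_2 = f(X_1) + ε_2. Then almost surely E[X_1 | X_2] = 0. -/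
open MeasureTheory ProbabilityTheory

/-!
Flipping the sign of `X₁` preserves both the joint law of the independent pair `(X₁, ε₂)` and the
value of `f X₁ + ε₂`, so `(X₁, X₂)` and `(-X₁, X₂)` have the same law. Conditional expectation
given `X₂` depends only on the joint law with `X₂`, hence `E[X₁ | X₂] = -E[X₁ | X₂]`.
-/

section JointLaw

variable {Ω Ω' E S : Type*} {mΩ : MeasurableSpace Ω} {mΩ' : MeasurableSpace Ω'}
  {μ : Measure Ω} {ν : Measure Ω'}
  [NormedAddCommGroup E] [NormedSpace ℝ E] [MeasurableSpace E] [BorelSpace E]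
  {mS : MeasurableSpace S}

theorem setIntegral_preimage_eq_of_identDistrib_prodMk
    {X : Ω → E} {Y : Ω → S} {X' : Ω' → E} {Y' : Ω' → S}
    (h : IdentDistrib (fun ω => (X ω, Y ω)) (fun ω => (X' ω, Y' ω)) μ ν)
    {B : Set S} (hB : MeasurableSet B) :
    ∫ ω in Y ⁻¹' B, X ω ∂μ = ∫ ω in Y' ⁻¹' B, X' ω ∂ν := by
  have hmeas : Measurable ((Prod.snd ⁻¹' B).indicator (Prod.fst : E × S → E)) :=
    measurable_fst.indicator (measurable_snd hB)
  have hYB : NullMeasurableSet (Y ⁻¹' B) μ :=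
    (h.comp measurable_snd).aemeasurable_fst.nullMeasurable hB
  have hYB' : NullMeasurableSet (Y' ⁻¹' B) ν :=
    (h.comp measurable_snd).aemeasurable_snd.nullMeasurable hB
  rw [← integral_indicator₀ hYB, ← integral_indicator₀ hYB']
  exact (h.comp hmeas).integral_eq

variable [CompleteSpace E] {X X' : Ω → E} {Y : Ω → S}

theorem condExp_comap_ae_eq_of_identDistrib_prodMk
    (hY : Measurable Y) [SigmaFinite (μ.trim hY.comap_le)] (hX : Integrable X μ)
    (h : IdentDistrib (fun ω => (X ω, Y ω)) (fun ω => (X' ω, Y ω)) μ μ) :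
    μ[X | mS.comap Y] =ᵐ[μ] μ[X' | mS.comap Y] := by
  have hX' : Integrable X' μ := (h.comp measurable_fst).integrable_snd hX
  refine ae_eq_condExp_of_forall_setIntegral_eq hY.comap_le hX'
    (fun _ _ _ => integrable_condExp.integrableOn) ?_
    stronglyMeasurable_condExp.aestronglyMeasurable
  rintro _ ⟨B, hB, rfl⟩ -
  rw [setIntegral_condExp hY.comap_le hX ⟨B, hB, rfl⟩]
  exact setIntegral_preimage_eq_of_identDistrib_prodMk h hB

theorem condExp_comap_ae_eq_zero_of_identDistrib_neg_prodMk
    (hY : Measurable Y) [SigmaFinite (μ.trim hY.comap_le)] (hX : Integrable X μ)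
    (h : IdentDistrib (fun ω => (X ω, Y ω)) (fun ω => (-X ω, Y ω)) μ μ) :
    μ[X | mS.comap Y] =ᵐ[μ] 0 := by
  have : IsAddTorsionFree E := .of_isTorsionFree ℝ E
  filter_upwards [condExp_comap_ae_eq_of_identDistrib_prodMk hY hX h,
    condExp_neg X (mS.comap Y)] with ω hflip hneg
  exact self_eq_neg.mp (hflip.trans hneg)

end JointLaw

theorem condexp_zero_of_even_general
    {Ω E T S : Type*} [MeasurableSpace Ω] {μ : Measure Ω} [IsFiniteMeasure μ]
    [NormedAddCommGroup E] [NormedSpace ℝ E] [CompleteSpace E] [MeasurableSpace E] [BorelSpace E]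
    [MeasurableSpace T] [mS : MeasurableSpace S]
    {X : Ω → E} {Z : Ω → T} (hX : Measurable X) (hZ : Measurable Z) (hint : Integrable X μ)
    (hsymm : μ.map X = μ.map (fun ω => -X ω)) (hindep : IndepFun X Z μ)
    {g : E × T → S} (hg : Measurable g) (heven : ∀ x z, g (-x, z) = g (x, z)) :
    μ[X | mS.comap fun ω => g (X ω, Z ω)] =ᵐ[μ] 0 := by
  have hflip : IdentDistrib (fun ω => (X ω, Z ω)) (fun ω => (-X ω, Z ω)) μ μ :=
    IdentDistrib.prodMk ⟨hX.aemeasurable, hX.neg.aemeasurable, hsymm⟩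
      (.refl hZ.aemeasurable) hindep (hindep.comp measurable_neg measurable_id)
  have hflip_even : IdentDistrib (fun ω => (X ω, g (X ω, Z ω)))
      (fun ω => (-X ω, g (X ω, Z ω))) μ μ := by
    simpa only [Function.comp_def, heven] using hflip.comp (measurable_fst.prodMk hg)
  exact condExp_comap_ae_eq_zero_of_identDistrib_neg_prodMk
    (hg.comp (hX.prodMk hZ)) hint hflip_even

/-- If `X₁` is integrable and symmetric about zero, `f` is a measurable even function
with `f(X₁)` integrable, `ε₂` is independent of `X₁` with mean zero, and
`X₂ = f(X₁) + ε₂`, then almost surely `E[X₁ | X₂] = 0`. -/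
theorem condexp_zero_of_even
    {Ω : Type*} [MeasurableSpace Ω] (μ : Measure Ω) [IsProbabilityMeasure μ]
    (X₁ ε₂ : Ω → ℝ) (hX₁ : Measurable X₁) (hε₂ : Measurable ε₂)
    (hint₁ : Integrable X₁ μ)
    (hsymm : Measure.map X₁ μ = Measure.map (fun ω => -X₁ ω) μ)
    (f : ℝ → ℝ) (hf : Measurable f) (heven : ∀ x : ℝ, f (-x) = f x)
    (hintf : Integrable (fun ω => f (X₁ ω)) μ)
    (hint₂ : Integrable ε₂ μ) (hmean₂ : ∫ ω, ε₂ ω ∂μ = 0)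
    (hindep : IndepFun X₁ ε₂ μ)
    (X₂ : Ω → ℝ) (hX₂ : X₂ = fun ω => f (X₁ ω) + ε₂ ω) :
    μ[X₁ | MeasurableSpace.comap X₂ Real.measurableSpace] =ᵐ[μ]
      fun _ => (0 : ℝ) := by
  subst hX₂
  exact condexp_zero_of_even_general hX₁ hε₂ hint₁ hsymm hindep
    (g := fun p => f p.1 + p.2) (by fun_prop) fun x z => by rw [heven]
end
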